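/- Let 0 ≤ γ < 1 and let a_1, …, a_T be nonnegative real numbers. Then Σ_{t=1}^T (1/√t) Σ_{j=1}^t γ^{t−j} a_j ≤ (1/(1−γ)) Σ_{t=1}^T a_t/√t. -/

import Mathlib

theorem aux_geo (γ : ℝ) (hγ0 : 0 ≤ γ) (a : ℕ → ℝ) (T : ℕ)
    (ha : ∀ t ∈ Finset.Icc 1 T, 0 ≤ a t) :
    (1 - γ) * ∑ t ∈ Finset.Icc 1 T, (1 / Real.sqrt t) * ∑ j ∈ Finset.Icc 1 t, γ ^ (t - j) * a j
      + γ * ((1 / Real.sqrt T) * ∑ j ∈ Finset.Icc 1 T, γ ^ (T - j) * a j)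
      ≤ ∑ t ∈ Finset.Icc 1 T, a t / Real.sqrt t := by
  induction T with
  | zero => simp
  | succ n ih =>
    have ha' : ∀ t ∈ Finset.Icc 1 n, 0 ≤ a t := fun t ht => ha t (by
      simp only [Finset.mem_Icc] at ht ⊢; omega)
    have ih := ih ha'
    have hS : 0 ≤ ∑ j ∈ Finset.Icc 1 n, γ ^ (n - j) * a j :=
      Finset.sum_nonneg fun j hj => mul_nonneg (pow_nonneg hγ0 _) (ha' j hj)
    have hrec : ∑ j ∈ Finset.Icc 1 (n + 1), γ ^ (n + 1 - j) * a j
        = γ * (∑ j ∈ Finset.Icc 1 n, γ ^ (n - j) * a j) + a (n + 1) := by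
      rw [Finset.sum_Icc_succ_top (by omega), Finset.mul_sum]
      congr 1
      · refine Finset.sum_congr rfl fun j hj => ?_
        have : n + 1 - j = (n - j) + 1 := by
          simp only [Finset.mem_Icc] at hj; omega
        rw [this, pow_succ]; ring
      · simp
    have hle : (1 / Real.sqrt ((n + 1 : ℕ) : ℝ)) * ∑ j ∈ Finset.Icc 1 n, γ ^ (n - j) * a j
        ≤ (1 / Real.sqrt n) * ∑ j ∈ Finset.Icc 1 n, γ ^ (n - j) * a j := by
      rcases Nat.eq_zero_or_pos n with h | h
      · subst h; simp
      · refine mul_le_mul_of_nonneg_right ?_ hS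
        apply one_div_le_one_div_of_le
        · exact Real.sqrt_pos.2 (by exact_mod_cast h)
        · exact Real.sqrt_le_sqrt (by exact_mod_cast Nat.le_succ n)
    rw [Finset.sum_Icc_succ_top (by omega), Finset.sum_Icc_succ_top (by omega) (fun t => a t / _),
      hrec]
    have h2 := mul_le_mul_of_nonneg_left hle hγ0
    rw [div_eq_mul_one_div (a (n + 1))]
    linarith

/-- For `0 ≤ γ < 1` and nonnegative reals `a 1, …, a T`,
`Σ_{t=1}^T (1/√t) Σ_{j=1}^t γ^(t−j) a j ≤ (1/(1−γ)) Σ_{t=1}^T a t / √t`. -/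
theorem sum_geometric_weighted_inv_sqrt_le
    (γ : ℝ) (hγ0 : 0 ≤ γ) (hγ1 : γ < 1) (T : ℕ) (a : ℕ → ℝ)
    (ha : ∀ t ∈ Finset.Icc 1 T, 0 ≤ a t) :
    ∑ t ∈ Finset.Icc 1 T, (1 / Real.sqrt t) * ∑ j ∈ Finset.Icc 1 t, γ ^ (t - j) * a j
      ≤ (1 / (1 - γ)) * ∑ t ∈ Finset.Icc 1 T, a t / Real.sqrt t := by
  have h := aux_geo γ hγ0 a T ha
  have hS : 0 ≤ ∑ j ∈ Finset.Icc 1 T, γ ^ (T - j) * a j :=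
    Finset.sum_nonneg fun j hj => mul_nonneg (pow_nonneg hγ0 _) (ha j hj)
  have h3 : 0 ≤ γ * ((1 / Real.sqrt T) * ∑ j ∈ Finset.Icc 1 T, γ ^ (T - j) * a j) :=
    mul_nonneg hγ0 (mul_nonneg (by positivity) hS)
  rw [one_div_mul_eq_div, le_div_iff₀ (by linarith)]
  linarith
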